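/- arXiv:1702.00092 — 2 statements merged into one kernel-verified Lean document; each statement's English description precedes it below -/
import Mathlib

section
/- Let K be a number field of odd degree over ℚ, and let O_{K,2} = O_K ⊗_ℤ ℤ₂. Then −1 ∉ (1 + 4O_{K,2})·O_{K,2}ˣ²; that is, the image of −1 in the 2-adic signature space V₂ = O_{K,2}ˣ/((1 + 4O_{K,2})·O_{K,2}ˣ²) is nontrivial. -/
open NumberField
open scoped TensorProduct

variable (K : Type*) [Field K] [NumberField K]

/-- `O_{K,2} = O_K ⊗_ℤ ℤ₂`. -/
def OK2 : Type _ := 𝓞 K ⊗[ℤ] ℤ_[2]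

noncomputable instance : CommRing (OK2 K) := inferInstanceAs (CommRing (𝓞 K ⊗[ℤ] ℤ_[2]))

attribute [irreducible] OK2

/-- The subgroup `(1 + 4·O_{K,2})·O_{K,2}ˣ²` of `O_{K,2}ˣ`: units congruent to a square
modulo `4`. -/
def modFourSquares : Subgroup (OK2 K)ˣ where
  carrier := {w : (OK2 K)ˣ | ∃ (a : OK2 K) (y : (OK2 K)ˣ),
    (w : OK2 K) = (1 + 4 * a) * (y : OK2 K) ^ 2}
  one_mem' := ⟨0, 1, by rw [Units.val_one]; ring⟩
  mul_mem' := by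
    rintro w₁ w₂ ⟨a₁, y₁, h₁⟩ ⟨a₂, y₂, h₂⟩
    refine ⟨a₁ + a₂ + 4 * (a₁ * a₂), y₁ * y₂, ?_⟩
    rw [Units.val_mul, Units.val_mul, h₁, h₂]
    ring
  inv_mem' := by
    rintro w ⟨a, y, h⟩
    have hww : (w : OK2 K) * ((w⁻¹ : (OK2 K)ˣ) : OK2 K) = 1 := w.mul_inv
    have hyy : (y : OK2 K) * ((y⁻¹ : (OK2 K)ˣ) : OK2 K) = 1 := y.mul_inv
    set e : OK2 K := ((w⁻¹ : (OK2 K)ˣ) : OK2 K) * (y : OK2 K) ^ 2 with he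
    have h1 : (1 + 4 * a) * e = 1 := by
      calc (1 + 4 * a) * e
          = ((1 + 4 * a) * (y : OK2 K) ^ 2) * ((w⁻¹ : (OK2 K)ˣ) : OK2 K) := by
            rw [he]; ring
        _ = (w : OK2 K) * ((w⁻¹ : (OK2 K)ˣ) : OK2 K) := by rw [← h]
        _ = 1 := hww
    have h2 : (1 : OK2 K) + 4 * (-(a * e)) = e := by linear_combination -h1
    refine ⟨-(a * e), y⁻¹, ?_⟩
    rw [h2, he]
    calc ((w⁻¹ : (OK2 K)ˣ) : OK2 K)
        = ((w⁻¹ : (OK2 K)ˣ) : OK2 K) *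
            ((y : OK2 K) * ((y⁻¹ : (OK2 K)ˣ) : OK2 K)) ^ 2 := by rw [hyy]; ring
      _ = ((w⁻¹ : (OK2 K)ˣ) : OK2 K) * (y : OK2 K) ^ 2 *
            ((y⁻¹ : (OK2 K)ˣ) : OK2 K) ^ 2 := by ring

/-- The 2-adic signature space `V₂ = O_{K,2}ˣ/((1 + 4·O_{K,2})·O_{K,2}ˣ²)`. -/
abbrev V2 := (OK2 K)ˣ ⧸ modFourSquares K

/-!
Over `ZMod 4` the norm of an algebra of odd rank `n` sends `-1` to `(-1) ^ n = -1` and squares to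
squares, while `-1` is not a square modulo `4`. The rank of `𝓞 K / 4` over `ZMod 4` is `[K : ℚ]`,
so `-1` is not a square in `𝓞 K / 4`, which is the reduction of `O_{K,2}` modulo `4`.
-/

section OddRank

variable {R S : Type*} [CommRing R] [CommRing S] [Algebra R S] [Module.Free R S]

theorem isSquare_pow_finrank_of_isSquare_algebraMap {r : R} (h : IsSquare (algebraMap R S r)) :
    IsSquare (r ^ Module.finrank R S) := by
  rw [← Algebra.norm_algebraMap (S := S) r]
  exact h.map (Algebra.norm R)

theorem isSquare_neg_one_of_odd_finrank (hodd : Odd (Module.finrank R S))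
    (h : IsSquare (-1 : S)) : IsSquare (-1 : R) := by
  rw [← hodd.neg_one_pow]
  exact isSquare_pow_finrank_of_isSquare_algebraMap (S := S) (by rwa [map_neg, map_one])

end OddRank

theorem one_add_four_mul_mul_sq_ne_neg_one {S T : Type*} [CommRing S] [CommRing T]
    [Algebra (ZMod 4) T] [Module.Free (ZMod 4) T] (hodd : Odd (Module.finrank (ZMod 4) T))
    (f : S →+* T) (a y : S) : (1 + 4 * a) * y ^ 2 ≠ -1 := by
  intro h
  have four_eq_zero : (4 : T) = 0 := by
    simpa only [nsmul_one, Nat.cast_ofNat] using ZModModule.char_nsmul_eq_zero 4 (1 : T)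
  have neg_one_eq_sq : (-1 : T) = f y ^ 2 := by
    simpa only [map_mul, map_add, map_pow, map_neg, map_one, map_ofNat, four_eq_zero, zero_mul,
      add_zero, one_mul] using (congrArg f h).symm
  have not_isSquare : ¬IsSquare (-1 : ZMod 4) := by decide
  exact not_isSquare (isSquare_neg_one_of_odd_finrank hodd (neg_one_eq_sq ▸ IsSquare.sq (f y)))

/-- Reduction modulo `4` on `A ⊗ ℤ₂`, where `A / 4A` is encoded as `ZMod 4 ⊗ A`: with this order of
the factors it carries Mathlib's `ZMod 4`-algebra structure. -/
noncomputable def reductionModFour (A : Type*) [CommRing A] :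
    A ⊗[ℤ] ℤ_[2] →+* ZMod 4 ⊗[ℤ] A :=
  (Algebra.TensorProduct.comm ℤ A (ZMod 4)).toRingHom.comp
    (Algebra.TensorProduct.map (.id ℤ A)
      (PadicInt.toZModPow (p := 2) 2).toIntAlgHom).toRingHom

theorem neg_one_nontrivial_in_v2_general {A : Type*} [CommRing A] [Module.Free ℤ A]
    (hodd : Odd (Module.finrank ℤ A)) (a y : A ⊗[ℤ] ℤ_[2]) : (1 + 4 * a) * y ^ 2 ≠ -1 := by
  have : Nontrivial (ZMod 4) := ZMod.nontrivial_iff.2 (by decide)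
  have rank_odd : Odd (Module.finrank (ZMod 4) (ZMod 4 ⊗[ℤ] A)) := by
    rwa [Module.finrank_baseChange]
  exact one_add_four_mul_mul_sq_ne_neg_one rank_odd (reductionModFour A) a y

/-- The defining identification of `OK2 K` with `𝓞 K ⊗[ℤ] ℤ_[2]`, needed because `OK2` is
irreducible. -/
noncomputable def OK2.ringEquivTensor : OK2 K ≃+* 𝓞 K ⊗[ℤ] ℤ_[2] := by
  with_unfolding_all exact RingEquiv.refl (𝓞 K ⊗[ℤ] ℤ_[2])

variable {K} in
theorem neg_one_notMem_modFourSquares (hodd : Odd (Module.finrank ℚ K)) :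
    (-1 : (OK2 K)ˣ) ∉ modFourSquares K := by
  rintro ⟨a, y, h⟩
  have rank_odd : Odd (Module.finrank ℤ (𝓞 K)) := by rwa [RingOfIntegers.rank]
  let e := OK2.ringEquivTensor K
  have h_tensor : (1 + 4 * e a) * e y ^ 2 = -1 := by
    simpa only [map_mul, map_add, map_pow, map_one, map_ofNat, map_neg, Units.val_neg,
      Units.val_one] using (congrArg e h).symm
  exact neg_one_nontrivial_in_v2_general rank_odd (e a) (e y) h_tensor

/-- Let `K` be a number field of odd degree over `ℚ`, and `O_{K,2} = O_K ⊗_ℤ ℤ₂`.  Then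
`−1 ∉ (1 + 4·O_{K,2})·O_{K,2}ˣ²`; that is, the image of `−1` in the 2-adic signature space
`V₂ = O_{K,2}ˣ/((1 + 4·O_{K,2})·O_{K,2}ˣ²)` is nontrivial. -/
theorem neg_one_nontrivial_in_v2 (hodd : Odd (Module.finrank ℚ K)) :
    (-1 : (OK2 K)ˣ) ∉ modFourSquares K ∧
    QuotientGroup.mk (s := modFourSquares K) (-1 : (OK2 K)ˣ) ≠ (1 : V2 K) := by
  have h := neg_one_notMem_modFourSquares hodd
  exact ⟨h, mt (QuotientGroup.eq_one_iff _).1 h⟩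
end

section
/- (Structure Theorem) Let F be a perfect field of characteristic 2, let W and W′ be finite-dimensional F-vector spaces with nondegenerate symmetric bilinear forms b, b′ of dimensions n and n′ of the same parity, and let S be a maximal totally isotropic subspace of V = W ⊥ W′. Set U = S ∩ W with k = dim U and U′ = S ∩ W′ with k′ = dim U′. Then: (a) n − n′ = 2(k − k′); (b) U and U′ have compatible isotropy types; and (c) for any vector-space complement 𝒦 of U in U^⊥ (orthogonal complement taken in W) and any vector-space complement 𝒦′ of U′ in U′^⊥ (taken in W′), there is a unique isometry τ : 𝒦 → 𝒦′ such that S = U ⊕ S̃ ⊕ U′ where S̃ = {w + τw : w ∈ 𝒦}. -/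
open Finset

variable {F W W' : Type*} [Field F] [PerfectField F] [CharP F 2]
  [AddCommGroup W] [Module F W] [FiniteDimensional F W]
  [AddCommGroup W'] [Module F W'] [FiniteDimensional F W']

/-- The bilinear form on the orthogonal direct sum `W ⊥ W'` of two bilinear form spaces. -/
def orthSumForm (b : W →ₗ[F] W →ₗ[F] F) (b' : W' →ₗ[F] W' →ₗ[F] F)
    (x y : W × W') : F :=
  b x.1 y.1 + b' x.2 y.2

/-- A subspace of `W ⊥ W'` is totally isotropic. -/
def IsTotallyIsotropic (b : W →ₗ[F] W →ₗ[F] F) (b' : W' →ₗ[F] W' →ₗ[F] F)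
    (S : Submodule F (W × W')) : Prop :=
  ∀ x ∈ S, ∀ y ∈ S, orthSumForm b b' x y = 0

/-- A subspace of `W ⊥ W'` is maximal totally isotropic. -/
def IsMaxTotallyIsotropic (b : W →ₗ[F] W →ₗ[F] F) (b' : W' →ₗ[F] W' →ₗ[F] F)
    (S : Submodule F (W × W')) : Prop :=
  IsTotallyIsotropic b b' S ∧
    ∀ T : Submodule F (W × W'), IsTotallyIsotropic b b' T → S ≤ T → T = S

/-- The orthogonal complement `U^⊥ = {w : b(w,u) = 0 for all u ∈ U}` of a subspace. -/
def orthComp {M : Type*} [AddCommGroup M] [Module F M]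
    (c : M →ₗ[F] M →ₗ[F] F) (U : Submodule F M) : Submodule F M where
  carrier := {w | ∀ u ∈ U, c w u = 0}
  zero_mem' := fun u _ => by simp
  add_mem' := by
    intro x y hx hy u hu
    rw [map_add, LinearMap.add_apply, hx u hu, hy u hu, add_zero]
  smul_mem' := by
    intro r x hx u hu
    rw [map_smul, LinearMap.smul_apply, hx u hu, smul_zero]

/-- The radical of the restriction of the form `c` to the alternating subspace
`M_alt = {w : c(w,w) = 0}`. -/
def altRadical {M : Type*} [AddCommGroup M] [Module F M]
    (c : M →ₗ[F] M →ₗ[F] F) : Set M :=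
  {w | c w w = 0 ∧ ∀ u, c u u = 0 → c w u = 0}

/-!
Over a perfect field of characteristic 2 the map `x ↦ √b(x, x)` is linear, so it is represented by a
characteristic vector `e`, with `b(x, x) = b(x, e)²`. An isotropic vector orthogonal to a maximal
totally isotropic `S` lies in `S`; hence `S = S^⊥ ∩ e^⊥` and `S^⊥ = S + ⟨e⟩`, and in even dimension
this forces `S^⊥ = S`.

For a Lagrangian `S` of `W ⊥ W'`, the projections of `S` are `U^⊥` and `U'^⊥`. Rank-nullity for the
two projections computes `dim S` twice and gives (a). The characteristic vector of `W ⊥ W'` is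
`(e, e')` and lies in `S`, while `rad(W_alt)` is spanned by `e` if `b(e, e) = 0` and is zero
otherwise, which gives (b). For (c), `S` is by Goursat's lemma the graph of an isomorphism `𝒦 ≃ 𝒦'`
modulo `U ⊕ U'`, and isotropy of `S` says that this isomorphism is an isometry because `-1 = 1`.
-/

open LinearMap (BilinForm)

section Goursat

variable {R M N : Type*} [Ring R] [AddCommGroup M] [Module R M] [AddCommGroup N] [Module R N]

theorem existsUnique_linearEquiv_mem (G : Submodule R (M × N))
    (hfst : ∀ x, ∃! y, (x, y) ∈ G) (hsnd : ∀ y, ∃! x, (x, y) ∈ G) :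
    ∃! τ : M ≃ₗ[R] N, ∀ x, (x, τ x) ∈ G := by
  have bijective_fst : Function.Bijective (Prod.fst ∘ G.subtype) := by
    refine ⟨?_, fun x => (hfst x).exists.elim fun y hxy => ⟨⟨(x, y), hxy⟩, rfl⟩⟩
    rintro ⟨⟨x, y₁⟩, h₁⟩ ⟨⟨_, y₂⟩, h₂⟩ (rfl : x = _)
    exact Subtype.ext (Prod.ext rfl ((hfst x).unique h₁ h₂))
  have bijective_snd : Function.Bijective (Prod.snd ∘ G.subtype) := by
    refine ⟨?_, fun y => (hsnd y).exists.elim fun x hxy => ⟨⟨(x, y), hxy⟩, rfl⟩⟩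
    rintro ⟨⟨x₁, y⟩, h₁⟩ ⟨⟨x₂, _⟩, h₂⟩ (rfl : y = _)
    exact Subtype.ext (Prod.ext ((hsnd y).unique h₁ h₂) rfl)
  obtain ⟨τ, rfl⟩ := Submodule.exists_equiv_eq_graph bijective_fst bijective_snd
  exact ⟨τ, fun x => rfl, fun σ hσ => LinearEquiv.ext hσ⟩

variable {S : Submodule R (M × N)} {P : Submodule R M} {Q : Submodule R N}

theorem existsUnique_right_mem (hdisj : Disjoint (S.comap (LinearMap.inr R M N)) Q)
    (hsup : S.map (LinearMap.snd R M N) ≤ S.comap (LinearMap.inr R M N) ⊔ Q)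
    {x : M} (hx : x ∈ S.map (LinearMap.fst R M N)) : ∃! y : Q, (x, (y : N)) ∈ S := by
  obtain ⟨⟨x, z⟩, hxz, rfl⟩ := hx
  obtain ⟨u, hu, y, hy, rfl⟩ := Submodule.mem_sup.1 (hsup ⟨_, hxz, rfl⟩)
  have hxy : (x, y) ∈ S := by simpa using S.sub_mem hxz hu
  refine ⟨⟨y, hy⟩, hxy, fun y' hxy' => Subtype.ext (sub_eq_zero.1 ?_)⟩
  refine Submodule.disjoint_def.1 hdisj _ ?_ (Q.sub_mem y'.2 hy)
  simpa using S.sub_mem hxy' hxy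

theorem existsUnique_left_mem (hdisj : Disjoint (S.comap (LinearMap.inl R M N)) P)
    (hsup : S.map (LinearMap.fst R M N) ≤ S.comap (LinearMap.inl R M N) ⊔ P)
    {y : N} (hy : y ∈ S.map (LinearMap.snd R M N)) : ∃! x : P, ((x : M), y) ∈ S := by
  have map_snd_swap : (S.comap (LinearEquiv.prodComm R N M).toLinearMap).map
      (LinearMap.snd R N M) = S.map (LinearMap.fst R M N) := by
    ext m
    simp
  have map_fst_swap : (S.comap (LinearEquiv.prodComm R N M).toLinearMap).map
      (LinearMap.fst R N M) = S.map (LinearMap.snd R M N) := by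
    ext n
    simp
  exact existsUnique_right_mem (S := S.comap (LinearEquiv.prodComm R N M).toLinearMap) hdisj
    (map_snd_swap.trans_le hsup) (map_fst_swap.ge hy)

theorem eq_sup_range_graph_iff
    (hsup : S.map (LinearMap.fst R M N) ≤ S.comap (LinearMap.inl R M N) ⊔ P) (τ : P →ₗ[R] Q) :
    S = (S.comap (LinearMap.inl R M N)).map (LinearMap.inl R M N) ⊔
        (S.comap (LinearMap.inr R M N)).map (LinearMap.inr R M N) ⊔
        LinearMap.range ((LinearMap.inl R M N).comp P.subtype +
          (LinearMap.inr R M N).comp (Q.subtype.comp τ)) ↔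
      ∀ x : P, ((x : M), (τ x : N)) ∈ S := by
  constructor
  · intro h x
    rw [h]
    exact Submodule.mem_sup_right ⟨x, by simp⟩
  · intro h
    refine le_antisymm ?_ (sup_le (sup_le (Submodule.map_comap_le _ _)
      (Submodule.map_comap_le _ _)) ?_)
    · rintro ⟨m, n⟩ hmn
      obtain ⟨u, hu, x, hx, rfl⟩ := Submodule.mem_sup.1 (hsup ⟨_, hmn, rfl⟩)
      have hn : (0, n - τ ⟨x, hx⟩) ∈ S := by
        simpa using S.sub_mem (S.sub_mem hmn hu) (h ⟨x, hx⟩)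
      have hdec : (u + x, n) = (u, 0) + (0, n - τ ⟨x, hx⟩) + (x, (τ ⟨x, hx⟩ : N)) := by simp
      rw [hdec]
      exact Submodule.add_mem_sup (Submodule.add_mem_sup ⟨u, hu, rfl⟩ ⟨_, hn, rfl⟩)
        ⟨⟨x, hx⟩, by simp⟩
    · rintro _ ⟨x, rfl⟩
      simpa using h x

theorem existsUnique_linearEquiv_coe_mem
    (hP : Disjoint (S.comap (LinearMap.inl R M N)) P)
    (hQ : Disjoint (S.comap (LinearMap.inr R M N)) Q)
    (hfst : S.comap (LinearMap.inl R M N) ⊔ P = S.map (LinearMap.fst R M N))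
    (hsnd : S.comap (LinearMap.inr R M N) ⊔ Q = S.map (LinearMap.snd R M N)) :
    ∃! τ : P ≃ₗ[R] Q, ∀ x : P, ((x : M), (τ x : N)) ∈ S :=
  existsUnique_linearEquiv_mem (S.comap (P.subtype.prodMap Q.subtype))
    (fun x => existsUnique_right_mem hQ hsnd.ge (hfst.le (Submodule.mem_sup_right x.2)))
    (fun y => existsUnique_left_mem hP hfst.ge (hsnd.le (Submodule.mem_sup_right y.2)))

end Goursat

theorem finrank_comap_add_finrank_map {K V₁ V V₂ : Type*} [DivisionRing K]
    [AddCommGroup V₁] [Module K V₁] [AddCommGroup V] [Module K V] [AddCommGroup V₂] [Module K V₂]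
    {f : V₁ →ₗ[K] V} {g : V →ₗ[K] V₂} (hf : Function.Injective f) (hfg : Function.Exact f g)
    (S : Submodule K V) [FiniteDimensional K S] :
    Module.finrank K (S.comap f) + Module.finrank K (S.map g) = Module.finrank K S := by
  have hker : Module.finrank K (S.comap f) =
      Module.finrank K (LinearMap.ker (g.domRestrict S)) :=
    calc Module.finrank K (S.comap f)
        = Module.finrank K ((S.comap f).map f) :=
          (Submodule.equivMapOfInjective f hf _).finrank_eq
      _ = Module.finrank K ↥(S ⊓ LinearMap.ker g) := by
          rw [Submodule.map_comap_eq, hfg.linearMap_ker_eq, inf_comm]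
      _ = Module.finrank K (LinearMap.ker (g.domRestrict S)) := by
          rw [LinearMap.ker_domRestrict, ← Submodule.map_comap_subtype,
            Submodule.finrank_map_subtype_eq]
  rw [hker, ← LinearMap.range_domRestrict, add_comm, LinearMap.finrank_range_add_finrank_ker]

section Lagrangian

variable {R M : Type*} [CommRing R] [AddCommGroup M] [Module R M]

/-- A subspace `S` is Lagrangian for `B` if it equals its own orthogonal complement. No
nondegeneracy of `B` is built in. -/
def IsLagrangian (B : BilinForm R M) (S : Submodule R M) : Prop :=
  B.orthogonal S = S

/-- A vector representing the square root of the diagonal `x ↦ B x x`. Over `𝔽₂`, where squaring is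
the identity, this is the usual notion of a characteristic vector. -/
def IsCharacteristicVector (B : BilinForm R M) (e : M) : Prop :=
  ∀ x, B x x = B x e ^ 2

theorem exists_dual_sq_eq_diag [CharP R 2] [PerfectRing R 2] {B : BilinForm R M}
    (hB : B.IsSymm) : ∃ f : Module.Dual R M, ∀ x, f x ^ 2 = B x x := by
  let f : Module.Dual R M :=
    { toFun := fun x => (frobeniusEquiv R 2).symm (B x x)
      map_add' := fun x y => by
        have cross_terms : B x y + B y x = 0 := by rw [hB.eq x y, CharTwo.add_self_eq_zero]
        rw [← map_add]
        congr 1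
        simp only [map_add, LinearMap.add_apply]
        linear_combination cross_terms
      map_smul' := fun r x => by
        apply (frobeniusEquiv R 2).injective
        simp only [map_smul, LinearMap.smul_apply, smul_eq_mul, RingHom.id_apply, map_mul,
          RingEquiv.apply_symm_apply]
        rw [frobeniusEquiv_apply, frobenius_def]
        ring }
  exact ⟨f, fun x => frobeniusEquiv_symm_pow_p R 2 (B x x)⟩

theorem exists_isCharacteristicVector {K V : Type*} [Field K] [CharP K 2] [PerfectRing K 2]
    [AddCommGroup V] [Module K V] [FiniteDimensional K V] {B : BilinForm K V} (hB : B.IsSymm)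
    (hnd : B.Nondegenerate) : ∃ e, IsCharacteristicVector B e := by
  obtain ⟨f, hf⟩ := exists_dual_sq_eq_diag hB
  refine ⟨(B.toDual hnd).symm f, fun x => ?_⟩
  rw [← hf, ← BilinForm.apply_toDual_symm_apply (hB := hnd) f x, hB.eq]

variable {B : BilinForm R M} {S : Submodule R M} {e x : M}

theorem IsCharacteristicVector.mem_orthogonal [IsReduced R] (he : IsCharacteristicVector B e)
    (hS : S ≤ B.orthogonal S) : e ∈ B.orthogonal S := fun s hs =>
  pow_eq_zero_iff two_ne_zero |>.1 <| (he s).symm.trans (hS hs s hs)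

theorem mem_orthogonal_sup_span_singleton :
    x ∈ B.orthogonal (S ⊔ Submodule.span R {e}) ↔ x ∈ B.orthogonal S ∧ B e x = 0 := by
  constructor
  · intro h
    exact ⟨BilinForm.orthogonal_le le_sup_left h,
      h e (Submodule.mem_sup_right (Submodule.mem_span_singleton_self e))⟩
  · rintro ⟨hS, he⟩ y hy
    obtain ⟨s, hs, t, ht, rfl⟩ := Submodule.mem_sup.1 hy
    obtain ⟨a, rfl⟩ := Submodule.mem_span_singleton.1 ht
    have hsx : B s x = 0 := hS s hs
    simp [hsx, he]

theorem mem_of_maximal_of_mem_orthogonal (hB : B.IsRefl)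
    (hmax : Maximal (fun T => T ≤ B.orthogonal T) S) (hx : x ∈ B.orthogonal S)
    (hxx : B x x = 0) : x ∈ S := by
  have isotropic : S ⊔ Submodule.span R {x} ≤ B.orthogonal (S ⊔ Submodule.span R {x}) := by
    refine sup_le (fun s hs => ?_) ((Submodule.span_singleton_le_iff_mem _ _).2 ?_)
    · exact mem_orthogonal_sup_span_singleton.2 ⟨hmax.prop hs, hB _ _ (hx s hs)⟩
    · exact mem_orthogonal_sup_span_singleton.2 ⟨hx, hxx⟩
  exact hmax.le_of_ge isotropic le_sup_left
    (Submodule.mem_sup_right (Submodule.mem_span_singleton_self x))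

theorem IsCharacteristicVector.orthogonal_sup_span_eq [IsReduced R]
    (he : IsCharacteristicVector B e) (hB : B.IsRefl)
    (hmax : Maximal (fun T => T ≤ B.orthogonal T) S) :
    B.orthogonal (S ⊔ Submodule.span R {e}) = S := by
  ext x
  rw [mem_orthogonal_sup_span_singleton]
  constructor
  · rintro ⟨hx, hex⟩
    exact mem_of_maximal_of_mem_orthogonal hB hmax hx (by rw [he, hB _ _ hex, sq, zero_mul])
  · exact fun hx => ⟨hmax.prop hx, hB _ _ (he.mem_orthogonal hmax.prop x hx)⟩

theorem IsCharacteristicVector.isLagrangian_of_maximal {K V : Type*} [Field K]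
    [AddCommGroup V] [Module K V] [FiniteDimensional K V] {B : BilinForm K V}
    {S : Submodule K V} {e : V} (he : IsCharacteristicVector B e) (hB : B.IsRefl)
    (hnd : B.Nondegenerate) (heven : Even (Module.finrank K V))
    (hmax : Maximal (fun T => T ≤ B.orthogonal T) S) :
    IsLagrangian B S := by
  have horth : B.orthogonal S = S ⊔ Submodule.span K {e} := by
    conv_lhs => rw [← he.orthogonal_sup_span_eq hB hmax]
    exact BilinForm.orthogonal_orthogonal hnd hB _
  by_cases heS : e ∈ S
  · rwa [sup_eq_left.2 ((Submodule.span_singleton_le_iff_mem e S).2 heS)] at horth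
  · have hdim := BilinForm.finrank_orthogonal hnd S
    rw [horth, Submodule.finrank_sup_span_singleton heS] at hdim
    obtain ⟨m, hm⟩ := heven
    have := S.finrank_le
    omega

end Lagrangian

section AltRadical

variable {K V : Type*} [Field K] [AddCommGroup V] [Module K V] [FiniteDimensional K V]
  {B : BilinForm K V} {e : V}

theorem IsCharacteristicVector.mem_altRadical_iff (he : IsCharacteristicVector B e)
    (hB : B.IsSymm) (hnd : B.Nondegenerate) {w : V} :
    w ∈ altRadical B ↔ B w w = 0 ∧ w ∈ Submodule.span K {e} := by
  have alternating_iff (u : V) : B u u = 0 ↔ u ∈ B.orthogonal (Submodule.span K {e}) := by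
    rw [he, pow_eq_zero_iff two_ne_zero, BilinForm.orthogonal_span_singleton_eq_toLin_ker,
      hB.eq]
    rfl
  refine and_congr_right fun _ => ?_
  rw [← BilinForm.orthogonal_orthogonal hnd hB.isRefl (Submodule.span K {e})]
  simp only [alternating_iff, BilinForm.mem_orthogonal_iff (N := B.orthogonal _), hB.eq w]

theorem IsCharacteristicVector.altRadical_subset_iff (he : IsCharacteristicVector B e)
    (hB : B.IsSymm) (hnd : B.Nondegenerate) {U : Submodule K V} :
    altRadical B ⊆ (U : Set V) ↔ (B e e = 0 → e ∈ U) := by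
  constructor
  · exact fun h hee => h <|
      (he.mem_altRadical_iff hB hnd).2 ⟨hee, Submodule.mem_span_singleton_self e⟩
  · intro h w hw
    obtain ⟨hww, hwe⟩ := (he.mem_altRadical_iff hB hnd).1 hw
    obtain ⟨a, rfl⟩ := Submodule.mem_span_singleton.1 hwe
    obtain rfl | ha := eq_or_ne a 0
    · simp
    · exact U.smul_mem a (h (by simpa [ha] using hww))

end AltRadical

section OrthogonalSum

variable {R M M' : Type*} [CommRing R] [AddCommGroup M] [Module R M] [AddCommGroup M']
  [Module R M']

/-- The orthogonal sum `B ⊥ B'`: `orthSumForm` bundled as a bilinear form, so that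
`LinearMap.BilinForm.orthogonal` applies to it. -/
def orthSum (B : BilinForm R M) (B' : BilinForm R M') : BilinForm R (M × M') :=
  B.compl₁₂ (LinearMap.fst R M M') (LinearMap.fst R M M') +
    B'.compl₁₂ (LinearMap.snd R M M') (LinearMap.snd R M M')

variable {B : BilinForm R M} {B' : BilinForm R M'}

theorem orthSum_apply (x y : M × M') : orthSum B B' x y = B x.1 y.1 + B' x.2 y.2 := rfl

theorem orthSum_isSymm (hB : B.IsSymm) (hB' : B'.IsSymm) : (orthSum B B').IsSymm :=
  ⟨fun x y => by simp only [orthSum_apply, hB.eq x.1, hB'.eq x.2]⟩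

theorem orthSum_nondegenerate (hB : B.Nondegenerate) (hB' : B'.Nondegenerate) :
    (orthSum B B').Nondegenerate := by
  constructor
  · intro x hx
    exact Prod.ext (hB.1 _ fun y => by simpa [orthSum_apply] using hx (y, 0))
      (hB'.1 _ fun y => by simpa [orthSum_apply] using hx (0, y))
  · intro x hx
    exact Prod.ext (hB.2 _ fun y => by simpa [orthSum_apply] using hx (y, 0))
      (hB'.2 _ fun y => by simpa [orthSum_apply] using hx (0, y))

theorem IsCharacteristicVector.orthSum [CharP R 2] {e : M} {e' : M'}
    (he : IsCharacteristicVector B e) (he' : IsCharacteristicVector B' e') :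
    IsCharacteristicVector (orthSum B B') (e, e') := fun x => by
  rw [orthSum_apply, orthSum_apply, CharTwo.add_sq, he, he']

theorem comap_inl_orthogonal_orthSum (S : Submodule R (M × M')) :
    ((orthSum B B').orthogonal S).comap (LinearMap.inl R M M') =
      B.orthogonal (S.map (LinearMap.fst R M M')) := by
  ext w
  simp [BilinForm.mem_orthogonal_iff, orthSum_apply]

theorem comap_inr_orthogonal_orthSum (S : Submodule R (M × M')) :
    ((orthSum B B').orthogonal S).comap (LinearMap.inr R M M') =
      B'.orthogonal (S.map (LinearMap.snd R M M')) := by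
  ext w
  simpa [BilinForm.mem_orthogonal_iff, orthSum_apply] using forall_comm

variable {S : Submodule R (M × M')}

theorem apply_fst_eq_apply_snd_of_isotropic [CharP R 2] (hS : S ≤ (orthSum B B').orthogonal S)
    {x y : M × M'} (hx : x ∈ S) (hy : y ∈ S) : B x.1 y.1 = B' x.2 y.2 :=
  CharTwo.add_eq_zero.1 (hS hy x hx)

theorem existsUnique_isometry_of_isotropic [CharP R 2] (hS : S ≤ (orthSum B B').orthogonal S)
    {P : Submodule R M} {Q : Submodule R M'}
    (hP : Disjoint (S.comap (LinearMap.inl R M M')) P)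
    (hQ : Disjoint (S.comap (LinearMap.inr R M M')) Q)
    (hfst : S.comap (LinearMap.inl R M M') ⊔ P = S.map (LinearMap.fst R M M'))
    (hsnd : S.comap (LinearMap.inr R M M') ⊔ Q = S.map (LinearMap.snd R M M')) :
    ∃! τ : P ≃ₗ[R] Q, (∀ x y : P, B' (τ x : M') (τ y : M') = B (x : M) (y : M)) ∧
      S = (S.comap (LinearMap.inl R M M')).map (LinearMap.inl R M M') ⊔
        (S.comap (LinearMap.inr R M M')).map (LinearMap.inr R M M') ⊔
        LinearMap.range ((LinearMap.inl R M M').comp P.subtype +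
          (LinearMap.inr R M M').comp (Q.subtype.comp (τ : P →ₗ[R] Q))) := by
  refine (existsUnique_congr fun τ => ?_).1 (existsUnique_linearEquiv_coe_mem hP hQ hfst hsnd)
  rw [eq_sup_range_graph_iff hfst.ge]
  exact (and_iff_right_of_imp fun h x y =>
    (apply_fst_eq_apply_snd_of_isotropic hS (h x) (h y)).symm).symm

end OrthogonalSum

section LagrangianOfOrthogonalSum

variable {K V V' : Type*} [Field K] [AddCommGroup V] [Module K V] [AddCommGroup V']
  [Module K V'] {B : BilinForm K V} {B' : BilinForm K V'} {S : Submodule K (V × V')}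

theorem IsLagrangian.map_fst [FiniteDimensional K V] (hS : IsLagrangian (orthSum B B') S)
    (hB : B.IsRefl) (hnd : B.Nondegenerate) :
    S.map (LinearMap.fst K V V') = B.orthogonal (S.comap (LinearMap.inl K V V')) := by
  conv_rhs => rw [← hS, comap_inl_orthogonal_orthSum]
  exact (BilinForm.orthogonal_orthogonal hnd hB _).symm

theorem IsLagrangian.map_snd [FiniteDimensional K V'] (hS : IsLagrangian (orthSum B B') S)
    (hB' : B'.IsRefl) (hnd' : B'.Nondegenerate) :
    S.map (LinearMap.snd K V V') = B'.orthogonal (S.comap (LinearMap.inr K V V')) := by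
  conv_rhs => rw [← hS, comap_inr_orthogonal_orthSum]
  exact (BilinForm.orthogonal_orthogonal hnd' hB' _).symm

theorem IsLagrangian.finrank_sub_finrank [FiniteDimensional K V] [FiniteDimensional K V']
    (hS : IsLagrangian (orthSum B B') S) (hB : B.IsRefl)
    (hB' : B'.IsRefl) (hnd : B.Nondegenerate) (hnd' : B'.Nondegenerate) :
    (Module.finrank K V : ℤ) - Module.finrank K V' =
      2 * ((Module.finrank K (S.comap (LinearMap.inl K V V')) : ℤ) -
        Module.finrank K (S.comap (LinearMap.inr K V V'))) := by
  have via_fst := finrank_comap_add_finrank_map LinearMap.inr_injective Function.Exact.inr_fst S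
  have via_snd := finrank_comap_add_finrank_map LinearMap.inl_injective Function.Exact.inl_snd S
  rw [hS.map_fst hB hnd, BilinForm.finrank_orthogonal hnd] at via_fst
  rw [hS.map_snd hB' hnd', BilinForm.finrank_orthogonal hnd'] at via_snd
  have := (S.comap (LinearMap.inl K V V')).finrank_le
  have := (S.comap (LinearMap.inr K V V')).finrank_le
  omega

theorem IsLagrangian.altRadical_subset_iff [CharP K 2] [PerfectRing K 2] [FiniteDimensional K V]
    [FiniteDimensional K V'] (hS : IsLagrangian (orthSum B B') S)
    (hB : B.IsSymm) (hB' : B'.IsSymm) (hnd : B.Nondegenerate) (hnd' : B'.Nondegenerate) :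
    altRadical B ⊆ (S.comap (LinearMap.inl K V V') : Set V) ↔
      altRadical B' ⊆ (S.comap (LinearMap.inr K V V') : Set V') := by
  obtain ⟨e, he⟩ := exists_isCharacteristicVector hB hnd
  obtain ⟨e', he'⟩ := exists_isCharacteristicVector hB' hnd'
  have mem : (e, e') ∈ S := hS.le ((he.orthSum he').mem_orthogonal hS.ge)
  have mem_iff : (e, 0) ∈ S ↔ (0, e') ∈ S := by
    rw [← S.sub_mem_iff_right mem]
    simp
  rw [he.altRadical_subset_iff hB hnd, he'.altRadical_subset_iff hB' hnd',
    apply_fst_eq_apply_snd_of_isotropic hS.ge mem mem]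
  exact imp_congr_right fun _ => mem_iff

end LagrangianOfOrthogonalSum

section MaximalTotallyIsotropic

variable {K V V' : Type*} [Field K] [AddCommGroup V] [Module K V] [AddCommGroup V'] [Module K V']

theorem orthComp_eq_orthogonal {B : BilinForm K V} (hB : B.IsSymm) (U : Submodule K V) :
    orthComp B U = B.orthogonal U :=
  Submodule.ext fun w => forall₂_congr fun u _ => by rw [hB.eq]

theorem isTotallyIsotropic_iff {B : BilinForm K V} {B' : BilinForm K V'}
    {S : Submodule K (V × V')} : IsTotallyIsotropic B B' S ↔ S ≤ (orthSum B B').orthogonal S :=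
  ⟨fun h y hy x hx => h x hx y hy, fun h x hx _ hy => h hy x hx⟩

theorem IsMaxTotallyIsotropic.isLagrangian [CharP K 2] [PerfectRing K 2]
    [FiniteDimensional K V] [FiniteDimensional K V'] {B : BilinForm K V}
    {B' : BilinForm K V'} {S : Submodule K (V × V')} (hS : IsMaxTotallyIsotropic B B' S)
    (hB : B.IsSymm) (hB' : B'.IsSymm) (hnd : B.Nondegenerate) (hnd' : B'.Nondegenerate)
    (hpar : Module.finrank K V % 2 = Module.finrank K V' % 2) :
    IsLagrangian (orthSum B B') S := by
  have hsymm := orthSum_isSymm hB hB'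
  have hnondeg := orthSum_nondegenerate hnd hnd'
  obtain ⟨e, he⟩ := exists_isCharacteristicVector hsymm hnondeg
  have heven : Even (Module.finrank K (V × V')) := by
    rw [Module.finrank_prod, Nat.even_add, Nat.even_iff, Nat.even_iff, hpar]
  have hmax : Maximal (fun T => T ≤ (orthSum B B').orthogonal T) S :=
    ⟨isTotallyIsotropic_iff.1 hS.1, fun T hT hST =>
      (hS.2 T (isTotallyIsotropic_iff.2 hT) hST).le⟩
  exact he.isLagrangian_of_maximal hsymm.isRefl hnondeg heven hmax

end MaximalTotallyIsotropic

/-- **Structure theorem.**  Let `F` be a perfect field of characteristic 2, let `W` and `W′`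
be finite-dimensional `F`-vector spaces with nondegenerate symmetric bilinear forms `b`, `b′`
of dimensions `n`, `n′` of the same parity, and let `S` be a maximal totally isotropic
subspace of `V = W ⊥ W′`.  Set `U = S ∩ W` with `k = dim U` and `U′ = S ∩ W′` with
`k′ = dim U′`.  Then (a) `n − n′ = 2(k − k′)`; (b) `U` and `U′` have compatible isotropy
types; and (c) for any vector-space complement `𝒦` of `U` in `U^⊥` and any vector-space
complement `𝒦′` of `U′` in `U′^⊥`, there is a unique isometry `τ : 𝒦 → 𝒦′` such that
`S = U ⊕ S̃ ⊕ U′` where `S̃ = {w + τw : w ∈ 𝒦}`. -/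
theorem maximal_totally_isotropic_structure
    (b : W →ₗ[F] W →ₗ[F] F) (b' : W' →ₗ[F] W' →ₗ[F] F)
    (hsymm : ∀ x y, b x y = b y x) (hsymm' : ∀ x y, b' x y = b' y x)
    (hnd : ∀ x, (∀ y, b x y = 0) → x = 0) (hnd' : ∀ x, (∀ y, b' x y = 0) → x = 0)
    (hpar : Module.finrank F W % 2 = Module.finrank F W' % 2)
    (S : Submodule F (W × W'))
    (hS : IsMaxTotallyIsotropic b b' S)
    (U : Submodule F W) (hU : U = S.comap (LinearMap.inl F W W'))
    (U' : Submodule F W') (hU' : U' = S.comap (LinearMap.inr F W W')) :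
    ((Module.finrank F W : ℤ) - Module.finrank F W' =
        2 * ((Module.finrank F U : ℤ) - Module.finrank F U')) ∧
    (altRadical b ⊆ (U : Set W) ↔ altRadical b' ⊆ (U' : Set W')) ∧
    (∀ 𝒦 : Submodule F W, ∀ 𝒦' : Submodule F W',
      U ⊓ 𝒦 = ⊥ → U ⊔ 𝒦 = orthComp b U →
      U' ⊓ 𝒦' = ⊥ → U' ⊔ 𝒦' = orthComp b' U' →
      ∃! τ : 𝒦 ≃ₗ[F] 𝒦',
        (∀ x y : 𝒦, b' ((τ x : 𝒦') : W') ((τ y : 𝒦') : W') = b (x : W) (y : W)) ∧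
        S = U.map (LinearMap.inl F W W') ⊔ U'.map (LinearMap.inr F W W') ⊔
          LinearMap.range ((LinearMap.inl F W W').comp 𝒦.subtype +
            (LinearMap.inr F W W').comp (𝒦'.subtype.comp (τ : 𝒦 →ₗ[F] 𝒦')))) := by
  have hb : BilinForm.IsSymm b := ⟨hsymm⟩
  have hb' : BilinForm.IsSymm b' := ⟨hsymm'⟩
  have hbnd : BilinForm.Nondegenerate b := hb.isRefl.nondegenerate_iff_separatingLeft.2 hnd
  have hbnd' : BilinForm.Nondegenerate b' := hb'.isRefl.nondegenerate_iff_separatingLeft.2 hnd'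
  have hL : IsLagrangian (orthSum b b') S := hS.isLagrangian hb hb' hbnd hbnd' hpar
  subst hU hU'
  refine ⟨hL.finrank_sub_finrank hb.isRefl hb'.isRefl hbnd hbnd',
    hL.altRadical_subset_iff hb hb' hbnd hbnd', fun 𝒦 𝒦' hdisj hsup hdisj' hsup' => ?_⟩
  rw [orthComp_eq_orthogonal hb, ← hL.map_fst hb.isRefl hbnd] at hsup
  rw [orthComp_eq_orthogonal hb', ← hL.map_snd hb'.isRefl hbnd'] at hsup'
  exact existsUnique_isometry_of_isotropic hL.ge (disjoint_iff.2 hdisj) (disjoint_iff.2 hdisj')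
    hsup hsup'
end
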